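/- The closed unit ball 𝔹³ centred at the origin in ℝ³ is E(3)-paradoxical, where E(3) is the group of isometries of Euclidean space ℝ³ (Banach–Tarski Paradox). -/

import Mathlib

/-- A subset `E` of a right `G`-set `Ω` (with action `act`) is `G`-paradoxical:
there are pairwise disjoint subsets `X₁,…,Xₙ, Y₁,…,Yₘ` of `E` and group elements
`g₁,…,gₙ, h₁,…,hₘ` such that `E = (⨆ Xᵢ) ⊔ (⨆ Yⱼ) = ⨆ Xᵢgᵢ = ⨆ Yⱼhⱼ`,
all indicated unions being disjoint. -/
def IsParadoxical {G Ω : Type*} [Group G] (act : Ω → G → Ω) (E : Set Ω) : Prop :=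
  ∃ (n m : ℕ) (X : Fin n → Set Ω) (Y : Fin m → Set Ω) (g : Fin n → G) (h : Fin m → G),
    (∀ i, X i ⊆ E) ∧ (∀ j, Y j ⊆ E) ∧
    (∀ i j, i ≠ j → Disjoint (X i) (X j)) ∧
    (∀ i j, i ≠ j → Disjoint (Y i) (Y j)) ∧
    (∀ i j, Disjoint (X i) (Y j)) ∧
    E = ((⋃ i, X i) ∪ ⋃ j, Y j) ∧
    E = (⋃ i, (fun x => act x (g i)) '' X i) ∧
    E = (⋃ j, (fun x => act x (h j)) '' Y j) ∧
    (∀ i j, i ≠ j →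
      Disjoint ((fun x => act x (g i)) '' X i) ((fun x => act x (g j)) '' X j)) ∧
    (∀ i j, i ≠ j →
      Disjoint ((fun x => act x (h i)) '' Y i) ((fun x => act x (h j)) '' Y j))

/-!
The rotations by `arccos (3 / 5)` about two coordinate axes generate a free subgroup of `SO₃(ℚ)`:
five times each generator is an integer matrix of rank one modulo `5`, and the product of such
matrices along a reduced word never vanishes modulo `5`. An element of infinite order in `SO₃(ℚ)`
has its axis in a rational direction, so this group acts freely on the complement of the countably
many rational lines through the origin. Hence, in any set `E` invariant under rotations, the part
`U` off the rational lines inherits the paradoxical decomposition of the free group: two disjoint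
copies of `U` embed piecewise into `U`, and then so do any finite number of pieces of `E`, each
embedded into `U`. Three pieces exhaust `E`: `U` itself; the nonzero points on rational lines, which
a half-turn about an axis with rationally independent coordinates moves off the rational lines; and
the origin, which is translated. A Schröder–Bernstein argument turns piecewise embeddings into
decompositions.
-/

open Set Equidecomp Matrix
open scoped Pointwise Function

section PiecewiseEmbeds

variable {X Y G H : Type*} [Group G] [MulAction G X] {A B C D U : Set X}

variable (G) in
/-- Equidecomposability of `A` with a subset of `B`: some injection of `A` into `B` agrees on each
of finitely many pieces of `A` with the action of an element of `G`. -/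
def PiecewiseEmbeds (A B : Set X) : Prop :=
  ∃ f : X → X, MapsTo f A B ∧ InjOn f A ∧ ∃ S : Finset G, IsDecompOn f A S

lemma PiecewiseEmbeds.of_smul_mem (g : G) (h : ∀ x ∈ A, g • x ∈ B) : PiecewiseEmbeds G A B :=
  ⟨(g • ·), h, (MulAction.injective g).injOn, {g}, fun _ _ ↦ ⟨g, by simp, rfl⟩⟩

lemma PiecewiseEmbeds.of_subset (h : A ⊆ B) : PiecewiseEmbeds G A B :=
  .of_smul_mem 1 fun x hx ↦ by simpa using h hx

lemma PiecewiseEmbeds.trans (hAB : PiecewiseEmbeds G A B) (hBC : PiecewiseEmbeds G B C) :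
    PiecewiseEmbeds G A C := by
  classical
  obtain ⟨f, hf, hf_inj, S, hS⟩ := hAB
  obtain ⟨g, hg, hg_inj, T, hT⟩ := hBC
  exact ⟨g ∘ f, hg.comp hf, hg_inj.comp hf_inj hf, T * S, hT.comp hS hf⟩

lemma PiecewiseEmbeds.union_of_disjoint (hAC : PiecewiseEmbeds G A C)
    (hBD : PiecewiseEmbeds G B D) (hAB : Disjoint A B) (hCD : Disjoint C D) :
    PiecewiseEmbeds G (A ∪ B) (C ∪ D) := by
  classical
  obtain ⟨f, hf, hf_inj, S, hS⟩ := hAC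
  obtain ⟨g, hg, hg_inj, T, hT⟩ := hBD
  have hfA : EqOn f (A.piecewise f g) A := (piecewise_eqOn A f g).symm
  have hgB : EqOn g (A.piecewise f g) B :=
    ((piecewise_eqOn_compl A f g).mono hAB.subset_compl_left).symm
  have hA := hf.congr hfA
  have hB := hg.congr hgB
  refine ⟨A.piecewise f g, hA.union_union hB, (injOn_union hAB).2 ⟨hf_inj.congr hfA,
    hg_inj.congr hgB, fun x hx y hy ↦ hCD.ne_of_mem (hA hx) (hB hy)⟩, S ∪ T, ?_⟩
  rintro x (hx | hx)
  · obtain ⟨k, hk, hkx⟩ := hS x hx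
    exact ⟨k, Finset.mem_union_left T hk, (hfA hx).symm.trans hkx⟩
  · obtain ⟨k, hk, hkx⟩ := hT x hx
    exact ⟨k, Finset.mem_union_right S hk, (hgB hx).symm.trans hkx⟩

lemma PiecewiseEmbeds.union (hAC : PiecewiseEmbeds G A C) (hBD : PiecewiseEmbeds G B D)
    (hCD : Disjoint C D) : PiecewiseEmbeds G (A ∪ B) (C ∪ D) := by
  rw [← union_sdiff_self]
  exact hAC.union_of_disjoint (.trans (.of_subset sdiff_subset) hBD) disjoint_sdiff_right hCD

lemma PiecewiseEmbeds.comap [Group H] [MulAction H Y] {V W : Set Y} (hVW : PiecewiseEmbeds H V W)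
    {φ : H → G} (hU : ∀ h, ∀ x ∈ U, φ h • x ∈ U) {w : X → Y}
    (hw : ∀ h, ∀ x ∈ U, w (φ h • x) = h • w x) :
    PiecewiseEmbeds G (U ∩ w ⁻¹' V) (U ∩ w ⁻¹' W) := by
  classical
  obtain ⟨f, hf, hf_inj, S, hS⟩ := hVW
  choose! γ hγS hγ using hS
  have hw_lift : ∀ x ∈ U ∩ w ⁻¹' V, w (φ (γ (w x)) • x) = f (w x) := fun x hx ↦ by
    rw [hw _ x hx.1, hγ _ hx.2]
  refine ⟨fun x ↦ φ (γ (w x)) • x, fun x hx ↦ ⟨hU _ x hx.1, ?_⟩, fun x hx y hy hxy ↦ ?_,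
    S.image φ, fun x hx ↦ ⟨_, Finset.mem_image_of_mem φ (hγS _ hx.2), rfl⟩⟩
  · rw [mem_preimage, hw_lift x hx]
    exact hf hx.2
  · have hwxy : w x = w y := hf_inj hx.2 hy.2 <| by
      rw [← hw_lift x hx, ← hw_lift y hy]
      exact congrArg w hxy
    exact MulAction.injective (φ (γ (w x))) (by simpa only [hwxy] using hxy)

/-- A **Schröder–Bernstein theorem** for equidecompositions. -/
theorem PiecewiseEmbeds.exists_bijOn (hAB : PiecewiseEmbeds G A B) (hBA : PiecewiseEmbeds G B A) :
    ∃ f : X → X, BijOn f A B ∧ ∃ S : Finset G, IsDecompOn f A S := by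
  classical
  obtain ⟨f, hf, hf_inj, S, hS⟩ := hAB
  obtain ⟨g, hg, hg_inj, T, hT⟩ := hBA
  obtain ⟨k, hk, hkR⟩ := Function.Embedding.schroeder_bernstein_of_rel
    (hf.restrict_inj.2 hf_inj) (hg.restrict_inj.2 hg_inj)
    (fun a b ↦ ∃ γ ∈ S ∪ T⁻¹, (b : X) = γ • (a : X))
    (fun a ↦ by
      obtain ⟨γ, hγ, h⟩ := hS a a.2
      exact ⟨γ, Finset.mem_union_left _ hγ, h⟩)
    (fun b ↦ by
      obtain ⟨γ, hγ, h⟩ := hT b b.2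
      exact ⟨γ⁻¹, Finset.mem_union_right _ (Finset.inv_mem_inv hγ), eq_inv_smul_iff.2 h.symm⟩)
  let F : X → X := Function.extend Subtype.val (Subtype.val ∘ k) id
  have hF (a : A) : F a = k a := Subtype.val_injective.extend_apply _ _ a
  refine ⟨F, ⟨fun a ha ↦ ?_, fun a ha b hb hab ↦ ?_, fun b hb ↦ ?_⟩, S ∪ T⁻¹, fun a ha ↦ ?_⟩
  · exact hF ⟨a, ha⟩ ▸ (k ⟨a, ha⟩).2
  · rw [hF ⟨a, ha⟩, hF ⟨b, hb⟩] at hab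
    exact congrArg Subtype.val (hk.1 (Subtype.ext hab))
  · obtain ⟨a, ha⟩ := hk.2 ⟨b, hb⟩
    exact ⟨a, a.2, by rw [hF, ha]⟩
  · exact hF ⟨a, ha⟩ ▸ hkR ⟨a, ha⟩

lemma exists_pieces_of_isDecompOn {f : X → X} {S : Finset G} (hS : IsDecompOn f A S) :
    ∃ (n : ℕ) (P : Fin n → Set X) (g : Fin n → G),
      Pairwise (Disjoint on P) ∧ ⋃ i, P i = A ∧ ∀ i, EqOn (g i • ·) f (P i) := by
  choose! γ hγS hγ using hS
  refine ⟨S.card, fun i ↦ {x ∈ A | γ x = S.equivFin.symm i}, fun i ↦ S.equivFin.symm i, ?_, ?_, ?_⟩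
  · refine fun i j hij ↦ disjoint_left.2 fun x hi hj ↦ hij ?_
    exact S.equivFin.symm.injective (Subtype.ext (hi.2.symm.trans hj.2))
  · ext x
    simp only [mem_iUnion]
    exact ⟨fun ⟨_, hx⟩ ↦ hx.1, fun hx ↦ ⟨S.equivFin ⟨γ x, hγS x hx⟩, hx, by simp⟩⟩
  · rintro i x ⟨hx, hxi⟩
    simp only [hγ x hx, hxi]

lemma exists_pieces_of_bijOn {f : X → X} (hf : BijOn f A B) {S : Finset G}
    (hS : IsDecompOn f A S) :
    ∃ (n : ℕ) (P : Fin n → Set X) (g : Fin n → G),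
      Pairwise (Disjoint on P) ∧ ⋃ i, P i = A ∧
      Pairwise (Disjoint on fun i ↦ (g i • ·) '' P i) ∧ ⋃ i, (g i • ·) '' P i = B := by
  obtain ⟨n, P, g, hP, rfl, hg⟩ := exists_pieces_of_isDecompOn hS
  have himage : ∀ i, (g i • ·) '' P i = f '' P i := fun i ↦ (hg i).image_eq
  refine ⟨n, P, g, hP, rfl, fun i j hij ↦ ?_, ?_⟩
  · simp only [Function.onFun, himage]
    exact (hP hij).image hf.injOn (subset_iUnion P i) (subset_iUnion P j)
  · simp only [himage, ← image_iUnion, hf.image_eq]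

end PiecewiseEmbeds

section IsDuplicable

variable {X G H : Type*} [Group G] [MulAction G X] {A B E U : Set X}

variable (G) in
/-- In Tarski's type semigroup this reads `2[U] ≤ [U]`: two disjoint copies of `U` embed piecewise
into `U`. -/
def IsDuplicable (U : Set X) : Prop :=
  ∃ C D : Set X, C ⊆ U ∧ D ⊆ U ∧ Disjoint C D ∧ PiecewiseEmbeds G U C ∧ PiecewiseEmbeds G U D

lemma IsDuplicable.piecewiseEmbeds_union (hU : IsDuplicable G U) (hA : PiecewiseEmbeds G A U)
    (hB : PiecewiseEmbeds G B U) : PiecewiseEmbeds G (A ∪ B) U := by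
  obtain ⟨C, D, hC, hD, hCD, hUC, hUD⟩ := hU
  exact ((hA.trans hUC).union (hB.trans hUD) hCD).trans (.of_subset (union_subset hC hD))

lemma IsDuplicable.of_embeds (hU : IsDuplicable G U) (hUE : U ⊆ E)
    (hEU : PiecewiseEmbeds G E U) : IsDuplicable G E := by
  obtain ⟨C, D, hC, hD, hCD, hUC, hUD⟩ := hU
  exact ⟨C, D, hC.trans hUE, hD.trans hUE, hCD, hEU.trans hUC, hEU.trans hUD⟩

theorem IsDuplicable.isParadoxical (hE : IsDuplicable G E) :
    IsParadoxical (fun (x : X) (g : G) ↦ g • x) E := by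
  obtain ⟨C, D, hC, hD, hCD, hEC, hED⟩ := hE
  obtain ⟨f, hf, S, hS⟩ := PiecewiseEmbeds.exists_bijOn (G := G) (.of_subset hC) hEC
  have hDC : D ⊆ E \ C := subset_sdiff.2 ⟨hD, hCD.symm⟩
  obtain ⟨g, hg, T, hT⟩ := PiecewiseEmbeds.exists_bijOn (G := G) (.of_subset sdiff_subset)
    (hED.trans (.of_subset hDC))
  obtain ⟨n, P, k, hP, hP_union, hkP, hkP_union⟩ := exists_pieces_of_bijOn hf hS
  obtain ⟨m, Q, l, hQ, hQ_union, hlQ, hlQ_union⟩ := exists_pieces_of_bijOn hg hT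
  have hPC : ∀ i, P i ⊆ C := fun i ↦ hP_union ▸ subset_iUnion P i
  have hQC : ∀ j, Q j ⊆ E \ C := fun j ↦ hQ_union ▸ subset_iUnion Q j
  refine ⟨n, m, P, Q, k, l, fun i ↦ (hPC i).trans hC, fun j ↦ (hQC j).trans sdiff_subset,
    fun _ _ h ↦ hP h, fun _ _ h ↦ hQ h, fun i j ↦ disjoint_sdiff_right.mono (hPC i) (hQC j),
    ?_, hkP_union.symm, hlQ_union.symm, fun _ _ h ↦ hkP h, fun _ _ h ↦ hlQ h⟩
  rw [hP_union, hQ_union, union_sdiff_cancel hC]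

lemma isDuplicable_univ_freeGroup {α : Type*} [Nontrivial α] :
    IsDuplicable (FreeGroup α) (univ : Set (FreeGroup α)) := by
  classical
  have hembeds (a : α) : PiecewiseEmbeds (FreeGroup α) (univ : Set (FreeGroup α))
      (FreeGroup.startsWith (a, true) ∪ FreeGroup.startsWith (a, false)) := by
    rw [← union_compl_self (FreeGroup.startsWith (a, true))]
    refine .union (.of_subset subset_rfl) (.of_smul_mem (.mk [(a, false)]) fun x hx ↦ ?_) (by simp)
    exact FreeGroup.startsWith_mk_mul x (by simpa using hx)
  obtain ⟨a, b, hab⟩ := exists_pair_ne α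
  exact ⟨_, _, subset_univ _, subset_univ _, by simp [hab], hembeds a, hembeds b⟩

lemma exists_equivariant_of_stabilizer_eq_bot [Group H] [MulAction H X] :
    ∃ w : X → H, ∀ x, MulAction.stabilizer H x = ⊥ → ∀ h : H, w (h • x) = h * w x := by
  let r (x : X) : X := (Quotient.mk (MulAction.orbitRel H X) x).out
  have hr_smul (h : H) (x : X) : r (h • x) = r x :=
    congrArg Quotient.out (Quotient.sound ⟨h, rfl⟩)
  have hr (x : X) : ∃ h : H, h • r x = x :=
    MulAction.mem_orbit_symm.1 (Quotient.mk_out (s := MulAction.orbitRel H X) x)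
  choose w hw using hr
  refine ⟨w, fun x hx h ↦ ?_⟩
  have hfix : h⁻¹ * w (h • x) * (w x)⁻¹ ∈ MulAction.stabilizer H x := by
    have hwx : (w x)⁻¹ • x = r (h • x) := by rw [hr_smul, inv_smul_eq_iff, hw]
    rw [MulAction.mem_stabilizer_iff, mul_smul, mul_smul, hwx, hw, inv_smul_smul]
  rw [hx, Subgroup.mem_bot, mul_inv_eq_one, inv_mul_eq_iff_eq_mul] at hfix
  exact hfix

theorem isDuplicable_of_freeGroup_hom {α : Type*} [Nontrivial α]
    (φ : FreeGroup α →* G) (hU : ∀ h, ∀ x ∈ U, φ h • x ∈ U)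
    (hfree : ∀ h, ∀ x ∈ U, φ h • x = x → h = 1) : IsDuplicable G U := by
  let _ : MulAction (FreeGroup α) X := .compHom X φ
  obtain ⟨w, hw⟩ := exists_equivariant_of_stabilizer_eq_bot (X := X) (H := FreeGroup α)
  have hw_equivariant : ∀ h, ∀ x ∈ U, w (φ h • x) = h • w x := fun h x hx ↦
    hw x ((Subgroup.eq_bot_iff_forall _).2 fun k hk ↦ hfree k x hx hk) h
  obtain ⟨C, D, -, -, hCD, hC, hD⟩ := isDuplicable_univ_freeGroup (α := α)
  refine ⟨U ∩ w ⁻¹' C, U ∩ w ⁻¹' D, inter_subset_left, inter_subset_left,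
    (hCD.preimage w).mono inter_subset_right inter_subset_right, ?_, ?_⟩
  · simpa using hC.comap hU hw_equivariant
  · simpa using hD.comap hU hw_equivariant

end IsDuplicable

section RationalRotations

/-- The integer matrix `A` such that `A / 5` is the rotation by the angle `arccos (3 / 5)` about the
first (`true`) or the last (`false`) coordinate axis. -/
def scaledRotation : Bool → Matrix (Fin 3) (Fin 3) ℤ
  | true => !![5, 0, 0; 0, 3, -4; 0, 4, 3]
  | false => !![3, -4, 0; 4, 3, 0; 0, 0, 5]

lemma scaledRotation_mul_transpose (b : Bool) :
    scaledRotation b * (scaledRotation b)ᵀ = Matrix.diagonal fun _ ↦ 25 := by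
  revert b; decide

/-- The rotations generating the free group, as elements of `O₃(ℚ)`. -/
def rationalRotation (b : Bool) : orthogonalGroup (Fin 3) ℚ :=
  ⟨(5⁻¹ : ℚ) • (scaledRotation b).map Int.cast, by
    have h := congrArg (Matrix.map · (Int.cast : ℤ → ℚ)) (scaledRotation_mul_transpose b)
    simp only [map_mul_intCast, transpose_map] at h
    rw [mem_orthogonalGroup_iff, transpose_smul, smul_mul_smul_comm, h,
      diagonal_map Int.cast_zero, ← diagonal_smul, ← diagonal_one]
    norm_num [Pi.smul_def]⟩

/-- Five times the rotation denoted by a letter of a word in the free group; the flag `false` marks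
an inverse letter. -/
def letterMatrix (s : Bool × Bool) : Matrix (Fin 3) (Fin 3) ℤ :=
  cond s.2 (scaledRotation s.1) (scaledRotation s.1)ᵀ

/-- The column factor of `letterMatrix s`, which modulo `5` has rank one; see
`letterMatrix_map_intCast`. -/
def letterVec : Bool × Bool → Fin 3 → ZMod 5
  | (true, true) => ![0, 3, 4]
  | (true, false) => ![0, 1, 2]
  | (false, true) => ![3, 4, 0]
  | (false, false) => ![1, 2, 0]

lemma letterMatrix_map_intCast (s : Bool × Bool) :
    (letterMatrix s).map (Int.cast : ℤ → ZMod 5) =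
      vecMulVec (letterVec s) (letterVec (s.1, !s.2)) := by
  revert s; decide

lemma letterVec_ne_zero (s : Bool × Bool) : letterVec s ≠ 0 := by
  revert s; decide

lemma letterVec_dotProduct_ne_zero (s t : Bool × Bool) (h : s.1 = t.1 → s.2 = t.2) :
    letterVec (s.1, !s.2) ⬝ᵥ letterVec t ≠ 0 := by
  revert s t; decide

lemma exists_prod_vecMulVec_eq {σ n R : Type*} [Fintype n] [DecidableEq n] [Ring R]
    [NoZeroDivisors R] {u v : σ → n → R} (hv : ∀ s, v s ≠ 0) (s : σ) (L : List σ)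
    (hL : (s :: L).IsChain fun s t ↦ v s ⬝ᵥ u t ≠ 0) :
    ∃ w ≠ 0, ((s :: L).map fun t ↦ vecMulVec (u t) (v t)).prod = vecMulVec (u s) w := by
  induction L generalizing s with
  | nil => exact ⟨v s, hv s, by simp⟩
  | cons t L ih =>
    obtain ⟨hst, hL⟩ := List.isChain_cons_cons.1 hL
    obtain ⟨w, hw, h⟩ := ih t hL
    refine ⟨(v s ⬝ᵥ u t) • w, smul_ne_zero hst hw, ?_⟩
    rw [List.map_cons, List.prod_cons, h, vecMulVec_mul_vecMulVec]

lemma five_smul_lift_rationalRotation_mk_singleton (s : Bool × Bool) :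
    (5 : ℚ) • (FreeGroup.lift rationalRotation (.mk [s]) : Matrix (Fin 3) (Fin 3) ℚ) =
      (letterMatrix s).map Int.cast := by
  obtain ⟨b, _ | _⟩ := s
  · simp [letterMatrix, rationalRotation, star_eq_conjTranspose, transpose_map]
  · simp [letterMatrix, rationalRotation]

lemma pow_smul_lift_rationalRotation (L : List (Bool × Bool)) :
    (5 : ℚ) ^ L.length • (FreeGroup.lift rationalRotation (.mk L) : Matrix (Fin 3) (Fin 3) ℚ) =
      ((L.map letterMatrix).prod).map Int.cast := by
  induction L with
  | nil => simp [← FreeGroup.one_eq_mk]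
  | cons s L ih =>
    rw [List.map_cons, List.prod_cons, map_mul_intCast, ← ih,
      ← five_smul_lift_rationalRotation_mk_singleton, smul_mul_smul_comm, ← pow_succ',
      ← Submonoid.coe_mul, ← map_mul, FreeGroup.mul_mk, List.length_cons, List.singleton_append]

theorem lift_rationalRotation_injective : Function.Injective (FreeGroup.lift rationalRotation) := by
  have : Fact (Nat.Prime 5) := ⟨by norm_num⟩
  refine (injective_iff_map_eq_one _).2 fun g hg ↦ ?_
  by_contra hne
  obtain ⟨s, L, hsL⟩ := List.exists_cons_of_ne_nil (mt FreeGroup.toWord_eq_nil_iff.1 hne)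
  have hchain := (FreeGroup.isReduced_toWord (x := g)).imp letterVec_dotProduct_ne_zero
  obtain ⟨w, hw, h⟩ := exists_prod_vecMulVec_eq (fun s ↦ letterVec_ne_zero (s.1, !s.2)) s L
    (hsL ▸ hchain)
  have hprod : (g.toWord.map letterMatrix).prod = Matrix.diagonal fun _ ↦ 5 ^ g.toWord.length := by
    refine Matrix.map_injective (Int.cast_injective (α := ℚ)) ?_
    dsimp only
    rw [← pow_smul_lift_rationalRotation, FreeGroup.mk_toWord, hg, diagonal_map Int.cast_zero,
      Submonoid.coe_one, smul_one_eq_diagonal]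
    simp
  have hmod : (g.toWord.map fun t ↦ vecMulVec (letterVec t) (letterVec (t.1, !t.2))).prod =
      Matrix.diagonal fun _ ↦ 5 ^ g.toWord.length := by
    have hcast := congrArg (Int.castRingHom (ZMod 5)).mapMatrix hprod
    rw [map_list_prod, List.map_map] at hcast
    simpa [Function.comp_def, letterMatrix_map_intCast] using hcast
  refine vecMulVec_ne_zero (letterVec_ne_zero s) hw ?_
  rw [← h, ← hsL, hmod, show (5 : ZMod 5) = 0 from rfl]
  simp [hsL]

end RationalRotations

section AxialVector

/-- The vector representing the antisymmetric matrix `A - Aᵀ` through the cross product. For a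
rotation matrix `A` it spans the axis, unless the rotation angle is a multiple of `π`. -/
def axialVector {R : Type*} [Sub R] (A : Matrix (Fin 3) (Fin 3) R) : Fin 3 → R :=
  ![A 2 1 - A 1 2, A 0 2 - A 2 0, A 1 0 - A 0 1]

lemma axialVector_map {F R S : Type*} [AddGroup R] [AddGroup S] [FunLike F R S]
    [AddMonoidHomClass F R S] (f : F) (A : Matrix (Fin 3) (Fin 3) R) :
    axialVector (A.map f) = f ∘ axialVector A := by
  ext i; fin_cases i <;> simp [axialVector]

lemma axialVector_crossProduct {R : Type*} [CommRing R] (A : Matrix (Fin 3) (Fin 3) R)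
    (x : Fin 3 → R) : axialVector A ⨯₃ x = (A - Aᵀ) *ᵥ x := by
  ext i
  fin_cases i <;>
    simp only [axialVector, cross_apply, cons_val, mulVec, dotProduct, Matrix.sub_apply,
      transpose_apply, Fin.sum_univ_three, Fin.zero_eta, Fin.mk_one, Fin.reduceFinMk] <;>
    ring

lemma axialVector_eq_zero_iff {R : Type*} [AddGroup R] {A : Matrix (Fin 3) (Fin 3) R} :
    axialVector A = 0 ↔ A.IsSymm := by
  simp only [axialVector, cons_eq_zero_iff, zero_empty, sub_eq_zero, IsSymm.ext_iff,
    Fin.forall_fin_succ, Fin.succ_zero_eq_one, Fin.succ_one_eq_two, IsEmpty.forall_iff]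
  grind

end AxialVector

section RationalLines

/-- Evaluation makes the isometry group of a space act on it. -/
instance isometryEquivMulAction {X : Type*} [PseudoEMetricSpace X] : MulAction (X ≃ᵢ X) X where
  smul f x := f x
  one_smul _ := rfl
  mul_smul _ _ _ := rfl

variable {n : Type*}

/-- A vector with rational coordinates, as a point of Euclidean space. -/
def ratVec (q : n → ℚ) : EuclideanSpace ℝ n := WithLp.toLp 2 fun i ↦ (q i : ℝ)

variable (n) in
/-- The union of the lines through the origin in rational directions. -/
def rationalLines : Set (EuclideanSpace ℝ n) :=
  {x | ∃ (t : ℝ) (q : n → ℚ), x = t • ratVec q}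

lemma smul_mem_rationalLines {x : EuclideanSpace ℝ n} (hx : x ∈ rationalLines n) (c : ℝ) :
    c • x ∈ rationalLines n := by
  obtain ⟨t, q, rfl⟩ := hx
  exact ⟨c * t, q, smul_smul c t _⟩

variable (n) in
lemma exists_linearIndependent_rat_real [Finite n] : ∃ v : n → ℝ, LinearIndependent ℚ v := by
  have := Fintype.ofFinite n
  have h : (Fintype.card n : Cardinal) ≤ Module.rank ℚ ℝ := by
    rw [Real.rank_rat_real]
    exact (Cardinal.natCast_lt_aleph0.trans Cardinal.aleph0_lt_continuum).le
  obtain ⟨s, hs, hs_indep⟩ := le_rank_iff_exists_linearIndependent_finset.1 h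
  let e : n ≃ s := (Fintype.equivFin n).trans (s.equivFinOfCardEq hs).symm
  exact ⟨_, hs_indep.comp e e.injective⟩

variable [Fintype n]

section RationalIsometry

variable [DecidableEq n]

/-- A rational matrix as an operator on Euclidean space. -/
noncomputable def rationalMatrixCLM :
    Matrix n n ℚ →⋆* (EuclideanSpace ℝ n →L[ℝ] EuclideanSpace ℝ n) where
  toFun M := toEuclideanCLM (𝕜 := ℝ) (M.map Rat.cast)
  map_one' := by simp
  map_mul' M N := by rw [map_mul_ratCast, map_mul]
  map_star' M := by
    rw [← map_star]
    congr 1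

/-- The isometry of Euclidean space given by a rational orthogonal matrix. -/
noncomputable def rationalIsometry :
    orthogonalGroup n ℚ →* (EuclideanSpace ℝ n ≃ᵢ EuclideanSpace ℝ n) :=
  .mk' (fun M ↦ (Unitary.linearIsometryEquiv (Unitary.map rationalMatrixCLM M)).toIsometryEquiv)
    fun M N ↦ by rw [map_mul, map_mul]; rfl

lemma ofLp_rationalIsometry (M : orthogonalGroup n ℚ) (x : EuclideanSpace ℝ n) :
    (rationalIsometry M x).ofLp = M.1.map Rat.cast *ᵥ x.ofLp := rfl

lemma norm_rationalIsometry (M : orthogonalGroup n ℚ) (x : EuclideanSpace ℝ n) :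
    ‖rationalIsometry M x‖ = ‖x‖ := by
  simp [rationalIsometry]

lemma rationalIsometry_smul_ratVec (M : orthogonalGroup n ℚ) (t : ℝ) (q : n → ℚ) :
    rationalIsometry M (t • ratVec q) = t • ratVec (M.1 *ᵥ q) := by
  ext i
  rw [ofLp_rationalIsometry, WithLp.ofLp_smul, mulVec_smul]
  simp [ratVec, mulVec, dotProduct]

lemma rationalIsometry_mem_rationalLines {M : orthogonalGroup n ℚ} {x : EuclideanSpace ℝ n} :
    rationalIsometry M x ∈ rationalLines n ↔ x ∈ rationalLines n := by
  have hM (M : orthogonalGroup n ℚ) {x : EuclideanSpace ℝ n} :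
      x ∈ rationalLines n → rationalIsometry M x ∈ rationalLines n := by
    rintro ⟨t, q, rfl⟩
    exact ⟨t, M.1 *ᵥ q, rationalIsometry_smul_ratVec M t q⟩
  refine ⟨fun hx ↦ ?_, hM M⟩
  simpa using hM M⁻¹ hx

theorem mem_rationalLines_of_rationalIsometry_eq_self {M : orthogonalGroup (Fin 3) ℚ}
    (hM : M ^ 2 ≠ 1) {x : EuclideanSpace ℝ (Fin 3)} (hx : rationalIsometry M x = x) :
    x ∈ rationalLines (Fin 3) := by
  have haxis : axialVector M.1 ≠ 0 := by
    rw [Ne, axialVector_eq_zero_iff]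
    intro hsymm
    have hmul := (mem_orthogonalGroup_iff _ _).1 M.2
    rw [hsymm.eq, ← sq] at hmul
    exact hM (Subtype.ext hmul)
  have hx_inv : rationalIsometry M⁻¹ x = x := by
    rw [map_inv]
    exact inv_smul_eq_iff (g := rationalIsometry M).2 hx.symm
  have hcross : (Rat.castHom ℝ ∘ axialVector M.1) ⨯₃ x.ofLp = 0 := by
    rw [← axialVector_map, axialVector_crossProduct, sub_mulVec, sub_eq_zero]
    exact congrArg WithLp.ofLp (hx.trans hx_inv.symm)
  have haxis_real : Rat.castHom ℝ ∘ axialVector M.1 ≠ 0 := fun h ↦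
    haxis ((Rat.castHom ℝ).injective.comp_left (h.trans (map_comp_zero _).symm))
  have hdep := mt crossProduct_ne_zero_iff_linearIndependent.2 (not_not.2 hcross)
  rw [LinearIndependent.pair_iff' haxis_real] at hdep
  push Not at hdep
  obtain ⟨t, ht⟩ := hdep
  exact ⟨t, axialVector M.1, WithLp.ofLp_injective 2 ht.symm⟩

end RationalIsometry

lemma ne_smul_ratVec_add_smul_ratVec (hn : 2 < Fintype.card n) {v : EuclideanSpace ℝ n}
    (hv : LinearIndependent ℚ v.ofLp) (s t : ℝ) (p q : n → ℚ) :
    v ≠ s • ratVec p + t • ratVec q := by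
  rintro rfl
  have hspan : range (s • ratVec p + t • ratVec q).ofLp ⊆ Submodule.span ℚ {s, t} := by
    rintro _ ⟨i, rfl⟩
    refine Submodule.mem_span_pair.2 ⟨p i, q i, ?_⟩
    simp [ratVec, Rat.smul_def, mul_comm]
  exact hn.not_ge <| (linearIndependent_le_span_aux' _ hv _ hspan).trans <| by
    simpa using Finset.card_le_two (a := s) (b := t)

lemma notMem_rationalLines_of_linearIndependent (hn : 2 < Fintype.card n) {v : EuclideanSpace ℝ n}
    (hv : LinearIndependent ℚ v.ofLp) : v ∉ rationalLines n := by
  rintro ⟨t, q, h⟩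
  exact ne_smul_ratVec_add_smul_ratVec hn hv t 0 q 0 (by simpa using h)

lemma inner_ratVec_ne_zero {v : EuclideanSpace ℝ n} (hv : LinearIndependent ℚ v.ofLp)
    {q : n → ℚ} (hq : q ≠ 0) : inner ℝ v (ratVec q) ≠ 0 := by
  intro h
  refine hq (funext <| Fintype.linearIndependent_iff.1 hv q ?_)
  simpa [PiLp.inner_apply, ratVec, Rat.smul_def] using h

theorem reflection_notMem_rationalLines (hn : 2 < Fintype.card n) {v x : EuclideanSpace ℝ n}
    (hv : LinearIndependent ℚ v.ofLp) (hx : x ∈ rationalLines n) (hx0 : x ≠ 0) :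
    (ℝ ∙ v).reflection x ∉ rationalLines n := by
  obtain ⟨t, q, rfl⟩ := hx
  have hq : q ≠ 0 := by
    rintro rfl
    exact hx0 (by ext; simp [ratVec])
  have hinner : inner ℝ v (t • ratVec q) ≠ 0 := by
    rw [inner_smul_right]
    exact mul_ne_zero (left_ne_zero_of_smul hx0) (inner_ratVec_ne_zero hv hq)
  have hv0 : v ≠ 0 := fun h ↦ hinner (by rw [h, inner_zero_left])
  set c : ℝ := 2 * (inner ℝ v (t • ratVec q) / ‖v‖ ^ 2) with hc
  have hc0 : c ≠ 0 := mul_ne_zero two_ne_zero (div_ne_zero hinner (by simpa using hv0))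
  have hreflection : (ℝ ∙ v).reflection (t • ratVec q) = c • v - t • ratVec q := by
    rw [Submodule.reflection_singleton_apply, hc, mul_smul, two_smul, two_smul]
    rfl
  rintro ⟨s, p, h⟩
  refine ne_smul_ratVec_add_smul_ratVec hn hv (c⁻¹ * s) (c⁻¹ * t) p q ?_
  rw [hreflection, sub_eq_iff_eq_add] at h
  rw [mul_smul, mul_smul, ← smul_add, ← h, inv_smul_smul₀ hc0]

variable {E : Set (EuclideanSpace ℝ n)}

lemma exists_mem_sdiff_rationalLines (hn : 2 < Fintype.card n)
    (hE : ∀ x ∈ E, ∀ y, ‖y‖ = ‖x‖ → y ∈ E) (hne : ∃ x ∈ E, x ≠ 0) :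
    ∃ u, u ∈ E \ rationalLines n := by
  obtain ⟨v, hv⟩ := exists_linearIndependent_rat_real n
  have hv_mem : WithLp.toLp 2 v ∉ rationalLines n := notMem_rationalLines_of_linearIndependent hn hv
  have hv0 : ‖WithLp.toLp 2 v‖ ≠ 0 := fun h ↦
    hv_mem ⟨0, 0, by rw [norm_eq_zero.1 h, zero_smul]⟩
  obtain ⟨x, hx, hx0⟩ := hne
  set c : ℝ := ‖x‖ / ‖WithLp.toLp 2 v‖ with hc
  have hc0 : c ≠ 0 := div_ne_zero (norm_ne_zero_iff.2 hx0) hv0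
  refine ⟨c • WithLp.toLp 2 v, hE x hx _ ?_, fun h ↦ hv_mem ?_⟩
  · rw [norm_smul, hc, norm_div, norm_norm, norm_norm, div_mul_cancel₀ _ hv0]
  · simpa [smul_smul, hc0] using smul_mem_rationalLines h c⁻¹

lemma piecewiseEmbeds_sdiff_rationalLines (hn : 2 < Fintype.card n)
    (hE : ∀ x ∈ E, ∀ y, ‖y‖ = ‖x‖ → y ∈ E) (hne : ∃ x ∈ E, x ≠ 0)
    (hdup : IsDuplicable (EuclideanSpace ℝ n ≃ᵢ EuclideanSpace ℝ n) (E \ rationalLines n)) :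
    PiecewiseEmbeds (EuclideanSpace ℝ n ≃ᵢ EuclideanSpace ℝ n) E (E \ rationalLines n) := by
  obtain ⟨v, hv⟩ := exists_linearIndependent_rat_real n
  obtain ⟨u, hu⟩ := exists_mem_sdiff_rationalLines hn hE hne
  have hlines : PiecewiseEmbeds (EuclideanSpace ℝ n ≃ᵢ EuclideanSpace ℝ n)
      ((E ∩ rationalLines n) \ {0}) (E \ rationalLines n) :=
    .of_smul_mem (ℝ ∙ WithLp.toLp 2 v).reflection.toIsometryEquiv fun x hx ↦
      ⟨hE x hx.1.1 _ ((ℝ ∙ WithLp.toLp 2 v).reflection.norm_map x),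
        reflection_notMem_rationalLines hn hv hx.1.2 hx.2⟩
  have hzero : PiecewiseEmbeds (EuclideanSpace ℝ n ≃ᵢ EuclideanSpace ℝ n)
      {0} (E \ rationalLines n) :=
    .of_smul_mem (.addRight u) fun x hx ↦ by
      obtain rfl : x = 0 := hx
      rw [← zero_add u] at hu
      exact hu
  refine .trans (.of_subset fun x hx ↦ ?_)
    (hdup.piecewiseEmbeds_union (hdup.piecewiseEmbeds_union (.of_subset subset_rfl) hlines) hzero)
  by_cases hx_mem : x ∈ rationalLines n <;> by_cases hx0 : x = 0 <;> simp [*]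

end RationalLines

lemma lift_rationalRotation_sq_ne_one {g : FreeGroup Bool} (hg : g ≠ 1) :
    FreeGroup.lift rationalRotation g ^ 2 ≠ 1 := by
  rw [← map_pow, Ne, map_eq_one_iff _ lift_rationalRotation_injective,
    pow_eq_one_iff_left two_ne_zero]
  exact hg

theorem isDuplicable_sdiff_rationalLines {E : Set (EuclideanSpace ℝ (Fin 3))}
    (hE : ∀ x ∈ E, ∀ y, ‖y‖ = ‖x‖ → y ∈ E) :
    IsDuplicable (EuclideanSpace ℝ (Fin 3) ≃ᵢ EuclideanSpace ℝ (Fin 3))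
      (E \ rationalLines (Fin 3)) := by
  refine isDuplicable_of_freeGroup_hom (rationalIsometry.comp (FreeGroup.lift rationalRotation))
    (fun g x hx ↦ ⟨hE x hx.1 _ (norm_rationalIsometry _ x),
      fun h ↦ hx.2 (rationalIsometry_mem_rationalLines.1 h)⟩) fun g x hx hgx ↦ ?_
  by_contra hg
  exact hx.2 <|
    mem_rationalLines_of_rationalIsometry_eq_self (lift_rationalRotation_sq_ne_one hg) hgx

theorem banach_tarski_ball_general {E : Set (EuclideanSpace ℝ (Fin 3))}
    (hE : ∀ x ∈ E, ∀ y, ‖y‖ = ‖x‖ → y ∈ E) (hne : ∃ x ∈ E, x ≠ 0) :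
    IsParadoxical (fun (x : EuclideanSpace ℝ (Fin 3))
      (f : EuclideanSpace ℝ (Fin 3) ≃ᵢ EuclideanSpace ℝ (Fin 3)) ↦ f x) E := by
  have hdup := isDuplicable_sdiff_rationalLines hE
  exact (hdup.of_embeds sdiff_subset
    (piecewiseEmbeds_sdiff_rationalLines (by simp) hE hne hdup)).isParadoxical

/-- Banach–Tarski Paradox: the closed unit ball `𝔹³` centred at the origin of Euclidean
space `ℝ³` is paradoxical for the group `E(3)` of isometries of `ℝ³` (acting on `ℝ³` by
evaluation). -/
theorem banach_tarski_ball :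
    IsParadoxical
      (fun (x : EuclideanSpace ℝ (Fin 3))
        (f : EuclideanSpace ℝ (Fin 3) ≃ᵢ EuclideanSpace ℝ (Fin 3)) => f x)
      (Metric.closedBall (0 : EuclideanSpace ℝ (Fin 3)) 1) := by
  refine banach_tarski_ball_general (fun x hx y hxy ↦ ?_) ⟨.single 0 1, by simp, by simp⟩
  rw [mem_closedBall_zero_iff] at hx ⊢
  exact hxy.trans_le hx
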